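/- Suppose m ≥ 1 is an integer divisible by l(l−1). Then exactly m − m/(l−1) of the minimal generators of I^{(m)} have degree strictly greater than 2m; that is, Σ_{d > 2m} v_d(I^{(m)}) = m − m/(l−1). -/

import Mathlib

open MvPolynomial Filter

/-- The degree-`d` homogeneous component of a homogeneous ideal `J ⊆ K[x,y,z]`,
as a `K`-vector subspace. -/
noncomputable def degComp {K : Type*} [Field K] (J : Ideal (MvPolynomial (Fin 3) K)) (d : ℕ) :
    Submodule K (MvPolynomial (Fin 3) K) :=
  Submodule.restrictScalars K J ⊓ homogeneousSubmodule (Fin 3) K d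

/-- `dim_K J_d`. -/
noncomputable def hdim {K : Type*} [Field K] (J : Ideal (MvPolynomial (Fin 3) K)) (d : ℕ) : ℕ :=
  Module.finrank K (degComp J d)

/-- The subspace `R_1 · J_{d-1}` of products of linear forms with degree-`(d-1)` elements. -/
noncomputable def oneGen {K : Type*} [Field K] (J : Ideal (MvPolynomial (Fin 3) K)) (d : ℕ) :
    Submodule K (MvPolynomial (Fin 3) K) :=
  Submodule.span K
    {x | ∃ f ∈ homogeneousSubmodule (Fin 3) K 1, ∃ g ∈ degComp J (d - 1), x = f * g}

/-- `v_d(J) = dim_K J_d / (R_1 · J_{d-1})`, the number of minimal generators of `J`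
in degree `d`. -/
noncomputable def vnum {K : Type*} [Field K] (J : Ideal (MvPolynomial (Fin 3) K)) (d : ℕ) : ℕ :=
  Module.finrank K
    (↥(degComp J d) ⧸ Submodule.comap (degComp J d).subtype (oneGen J d))

/-!
In coordinates with `p_{l+1} = (1, 0, 0)` and `L = {x = 0}`, the ideal `I^{(m)}` is
`(x, G) ^ m ∩ (y, z) ^ m`, where `G ∈ K[y, z]` is the product of the `l` linear forms cutting out
the collinear points on `L`. So `F = ∑ x ^ k c_k` with `c_k ∈ K[y, z]` lies in `I^{(m)}` if and only
if `G ^ (m - k) ∣ c_k` and `c_k ∈ (y, z) ^ m` for every `k`.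

In a degree `d > 2m`, a summand `x ^ k c_k` comes from degree `d - 1`: divide by `x` if `k > m`, and
otherwise split a linear form off the cofactor `c_k / G ^ (m - k)`. This fails only if the cofactor
is a constant, and then the summand really is new, because all elements of degree `d - 1` have
`c_k = 0`. The minimal generators in degrees above `2m` are therefore the `x ^ (m - j) G ^ j` with
`m + (l - 1) j > 2m`, and these are the `j` with `m / (l - 1) < j ≤ m`.
-/

section HomogeneousPolynomials

variable {σ R : Type*} [CommSemiring R]

theorem homogeneousComponent_mul_of_isHomogeneous {f : MvPolynomial σ R} {a : ℕ}
    (hf : f.IsHomogeneous a) (g : MvPolynomial σ R) (d : ℕ) :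
    homogeneousComponent d (f * g) =
      if a ≤ d then f * homogeneousComponent (d - a) g else 0 := by
  let : GradedAlgebra (homogeneousSubmodule σ R) := gradedAlgebra
  have hcoe (p : MvPolynomial σ R) (i : ℕ) :
      (DirectSum.decompose (homogeneousSubmodule σ R) p i : MvPolynomial σ R) =
        homogeneousComponent i p := decomposition.decompose'_apply p i
  simpa only [hcoe] using
    DirectSum.coe_decompose_mul_of_left_mem (homogeneousSubmodule σ R) d hf

theorem exists_isHomogeneous_eq_mul_of_dvd {f g : MvPolynomial σ R} {a d : ℕ}
    (hf : f.IsHomogeneous a) (hg : g.IsHomogeneous d) (hfg : f ∣ g) :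
    ∃ h, h.IsHomogeneous (d - a) ∧ g = f * h := by
  obtain ⟨h, rfl⟩ := hfg
  have hcomp := homogeneousComponent_mul_of_isHomogeneous hf h d
  rw [homogeneousComponent_eq_self hg] at hcomp
  split_ifs at hcomp
  · exact ⟨_, homogeneousComponent_isHomogeneous _ _, hcomp⟩
  · exact ⟨0, isHomogeneous_zero _ _ _, by rw [hcomp, mul_zero]⟩

theorem exists_smul_eq_of_isHomogeneous_of_dvd {f g : MvPolynomial σ R} {d : ℕ}
    (hf : f.IsHomogeneous d) (hg : g.IsHomogeneous d) (hfg : f ∣ g) : ∃ c : R, c • f = g := by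
  obtain ⟨h, hh, rfl⟩ := exists_isHomogeneous_eq_mul_of_dvd hf hg hfg
  rw [Nat.sub_self, ← totalDegree_zero_iff_isHomogeneous, totalDegree_eq_zero_iff_eq_C] at hh
  exact ⟨h.coeff 0, by rw [smul_eq_C_mul, mul_comm, ← hh]⟩

theorem eq_zero_of_isHomogeneous_of_dvd_of_lt {f g : MvPolynomial σ R} {a d : ℕ}
    (hf : f.IsHomogeneous a) (hg : g.IsHomogeneous d) (hfg : f ∣ g) (hda : d < a) : g = 0 := by
  obtain ⟨h, rfl⟩ := hfg
  rw [← homogeneousComponent_eq_self hg, homogeneousComponent_mul_of_isHomogeneous hf,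
    if_neg hda.not_ge]

theorem mem_pow_idealOfVars_of_isHomogeneous {f : MvPolynomial σ R} {d m : ℕ}
    (hf : f.IsHomogeneous d) (hmd : m ≤ d) : f ∈ idealOfVars σ R ^ m :=
  (mem_pow_idealOfVars_iff' m f).mpr fun _ hs => hf.coeff_eq_zero (hs.trans_le hmd).ne

end HomogeneousPolynomials

section FinSuccEquiv

variable {R : Type*} [CommSemiring R] {n : ℕ}

theorem finSuccEquiv_coeff_eq_zero_of_lt {F : MvPolynomial (Fin (n + 1)) R} {d k : ℕ}
    (hF : F.IsHomogeneous d) (hk : d < k) : (finSuccEquiv R n F).coeff k = 0 := by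
  by_contra hne
  have := totalDegree_coeff_finSuccEquiv_add_le F k hne
  have := hF.totalDegree_le
  omega

theorem finSuccEquiv_rename_succ (g : MvPolynomial (Fin n) R) :
    finSuccEquiv R n (rename Fin.succ g) = Polynomial.C g := by
  induction g using MvPolynomial.induction_on with
  | C a => simp [finSuccEquiv_apply]
  | add f g hf hg => simp only [map_add, hf, hg]
  | mul_X f i hf => simp only [map_mul, rename_X, finSuccEquiv_X_succ, hf]

theorem finSuccEquiv_X_pow_mul_rename_succ (k : ℕ) (g : MvPolynomial (Fin n) R) :
    finSuccEquiv R n (X 0 ^ k * rename Fin.succ g) = Polynomial.monomial k g := by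
  rw [map_mul, map_pow, finSuccEquiv_X_zero, finSuccEquiv_rename_succ, mul_comm,
    Polynomial.C_mul_X_pow_eq_monomial]

theorem sum_X_pow_mul_rename_succ_coeff (F : MvPolynomial (Fin (n + 1)) R) :
    ∑ k ∈ (finSuccEquiv R n F).support,
      X 0 ^ k * rename Fin.succ ((finSuccEquiv R n F).coeff k) = F := by
  apply (finSuccEquiv R n).injective
  simp only [map_sum, finSuccEquiv_X_pow_mul_rename_succ]
  exact (Polynomial.as_sum_support _).symm

theorem isHomogeneous_X_pow_mul_rename_succ {g : MvPolynomial (Fin n) R} {k e d : ℕ}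
    (hg : g.IsHomogeneous e) (hd : k + e = d) :
    (X 0 ^ k * rename Fin.succ g).IsHomogeneous d :=
  hd ▸ (isHomogeneous_X_pow 0 k).mul hg.rename_isHomogeneous

end FinSuccEquiv

section PowersOfIdeals

theorem mem_span_X_C_pow_iff {R : Type*} [CommSemiring R] {a : R} {m : ℕ} {f : Polynomial R} :
    f ∈ (Ideal.span {Polynomial.X, Polynomial.C a}) ^ m ↔ ∀ k, a ^ (m - k) ∣ f.coeff k := by
  constructor
  · intro hf
    induction m generalizing f with
    | zero => simp
    | succ m ih =>
      rw [pow_succ', Ideal.span_insert, Ideal.sup_mul, ← Ideal.span_insert,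
        Submodule.mem_sup] at hf
      obtain ⟨_, hXu, _, hav, rfl⟩ := hf
      obtain ⟨u, hu, rfl⟩ := Ideal.mem_span_singleton_mul.mp hXu
      obtain ⟨v, hv, rfl⟩ := Ideal.mem_span_singleton_mul.mp hav
      intro k
      rw [Polynomial.coeff_add, Polynomial.coeff_C_mul]
      refine dvd_add ?_ ((pow_dvd_pow a (by omega : m + 1 - k ≤ m - k + 1)).trans ?_)
      · cases k with
        | zero => simp
        | succ k =>
          rw [Polynomial.coeff_X_mul, Nat.add_sub_add_right]
          exact ih hu k
      · rw [pow_succ']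
        exact mul_dvd_mul_left a (ih hv k)
  · intro hf
    rw [f.as_sum_support_C_mul_X_pow]
    refine Ideal.sum_mem _ fun k _ => ?_
    obtain ⟨c, hc⟩ := hf k
    have hmem : Polynomial.C a ^ (m - k) * Polynomial.X ^ k ∈
        Ideal.span {Polynomial.X, Polynomial.C a} ^ (m - k + k) := by
      rw [pow_add]
      exact Ideal.mul_mem_mul (Ideal.pow_mem_pow (Ideal.subset_span (by simp)) _)
        (Ideal.pow_mem_pow (Ideal.subset_span (by simp)) _)
    have hfactor : Polynomial.C (f.coeff k) * Polynomial.X ^ k =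
        Polynomial.C c * (Polynomial.C a ^ (m - k) * Polynomial.X ^ k) := by
      rw [hc, Polynomial.C_mul, Polynomial.C_pow]
      ring
    rw [hfactor]
    exact Ideal.mul_mem_left _ _ (Ideal.pow_le_pow_right (by omega) hmem)

theorem mem_pow_iff_map_mem_pow {A B : Type*} [CommSemiring A] [CommSemiring B] (e : A ≃+* B)
    {I : Ideal A} {m : ℕ} {a : A} : a ∈ I ^ m ↔ e a ∈ I.map e ^ m := by
  rw [← Ideal.map_pow, Ideal.mem_map_of_equiv]
  simp

end PowersOfIdeals

section PointIdeal

variable {σ K : Type*} [Field K]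

/-- Restriction of polynomials to the line `{T • p}` through the origin and `p`, as a
polynomial in the parameter `T`. -/
noncomputable def lineEval (p : σ → K) : MvPolynomial σ K →ₐ[K] Polynomial K :=
  aeval fun j => Polynomial.C (p j) * Polynomial.X

/-- The homogeneous ideal of the point of projective space with coordinate vector `p`, encoded as
the ideal of all polynomials vanishing on the line spanned by `p`. -/
noncomputable def pointIdeal (p : σ → K) : Ideal (MvPolynomial σ K) :=
  RingHom.ker (lineEval p)

theorem mem_pointIdeal {p : σ → K} {F : MvPolynomial σ K} :
    F ∈ pointIdeal p ↔ lineEval p F = 0 := RingHom.mem_ker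

theorem lineEval_eq_C_mul_X_pow {F : MvPolynomial σ K} {d : ℕ} (hF : F.IsHomogeneous d)
    (p : σ → K) : lineEval p F = Polynomial.C (eval p F) * Polynomial.X ^ d := by
  induction hF using IsWeightedHomogeneous.induction_on with
  | zero => simp
  | add F G _ _ hF hG => simp only [map_add, hF, hG, add_mul]
  | monomial s a hs =>
    have hdeg : s.degree = d := (DFunLike.congr_fun Finsupp.degree_eq_weight_one s).trans hs
    rw [← hdeg, lineEval, aeval_monomial, eval_monomial]
    simp [mul_pow, Finsupp.prod, Finset.prod_mul_distrib, Finset.prod_pow_eq_pow_sum,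
      Finsupp.degree_apply, mul_assoc]

theorem coeff_lineEval (p : σ → K) (F : MvPolynomial σ K) (n : ℕ) :
    (lineEval p F).coeff n = eval p (homogeneousComponent n F) := by
  conv_lhs => rw [← sum_homogeneousComponent F, map_sum]
  simp only [lineEval_eq_C_mul_X_pow (homogeneousComponent_isHomogeneous _ F),
    Polynomial.finsetSum_coeff, Polynomial.coeff_C_mul_X_pow, Finset.sum_ite_eq,
    Finset.mem_range, ite_eq_left_iff]
  intro hn
  rw [homogeneousComponent_eq_zero n F (by omega), map_zero]

theorem mem_pointIdeal_iff_eval_homogeneousComponent {p : σ → K} {F : MvPolynomial σ K} :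
    F ∈ pointIdeal p ↔ ∀ n, eval p (homogeneousComponent n F) = 0 := by
  simp only [mem_pointIdeal, Polynomial.ext_iff, coeff_lineEval, Polynomial.coeff_zero]

theorem pointIdeal_eq_span {p : σ → K} {i : σ} (hi : p i ≠ 0) :
    pointIdeal p = Ideal.span (Set.range fun j => C (p i) * X j - C (p j) * X i) := by
  set I := Ideal.span (Set.range fun j => C (p i) * X j - C (p j) * X i : Set (MvPolynomial σ K))
    with hI
  apply le_antisymm
  · intro F hF
    -- modulo `I`, substituting `T = X i / p i` into the restriction of `F` recovers `F`
    have hsubst : (Ideal.Quotient.mkₐ K I).comp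
        ((Polynomial.aeval (C (p i)⁻¹ * X i : MvPolynomial σ K)).comp (lineEval p)) =
          Ideal.Quotient.mkₐ K I := by
      refine algHom_ext fun j => ?_
      have hj : C (-(p i)⁻¹) * (C (p i) * X j - C (p j) * X i) ∈ I :=
        Ideal.mul_mem_left _ _ (Ideal.subset_span ⟨j, rfl⟩)
      simp only [AlgHom.comp_apply, lineEval, aeval_X, map_mul, Polynomial.aeval_C,
        Polynomial.aeval_X, algebraMap_eq]
      rw [← map_mul, ← map_mul, Ideal.Quotient.mkₐ_eq_mk, Ideal.Quotient.eq]
      have hinv : (C (p i)⁻¹ : MvPolynomial σ K) * C (p i) = 1 := by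
        rw [← C_mul, inv_mul_cancel₀ hi, C_1]
      convert hj using 1
      rw [C_neg]
      linear_combination X j * hinv
    rw [← Ideal.Quotient.eq_zero_iff_mem, ← Ideal.Quotient.mkₐ_eq_mk K, ← hsubst,
      AlgHom.comp_apply, AlgHom.comp_apply, mem_pointIdeal.mp hF, map_zero, map_zero]
  · rw [hI, Ideal.span_le]
    rintro _ ⟨j, rfl⟩
    simp only [SetLike.mem_coe, mem_pointIdeal, lineEval, map_sub, map_mul, aeval_X, aeval_C,
      Polynomial.algebraMap_eq]
    ring

theorem pointIdeal_single_zero (n : ℕ) :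
    pointIdeal (Pi.single 0 1 : Fin (n + 1) → K) =
      Ideal.span (Set.range fun j => X (Fin.succ j)) := by
  rw [pointIdeal_eq_span (i := 0) (by simp), Fin.range_fin_succ]
  simp [Fin.tail_def]

theorem mem_pointIdeal_cons_zero_iff {n : ℕ} {q : Fin n → K} {F : MvPolynomial (Fin (n + 1)) K} :
    F ∈ pointIdeal (Fin.cons 0 q) ↔ (finSuccEquiv K n F).coeff 0 ∈ pointIdeal q := by
  suffices lineEval (Fin.cons 0 q) F = lineEval q ((finSuccEquiv K n F).coeff 0) by
    rw [mem_pointIdeal, mem_pointIdeal, this]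
  induction F using MvPolynomial.induction_on with
  | C a => simp [finSuccEquiv_apply, lineEval]
  | add F G hF hG => simp only [map_add, Polynomial.coeff_add, hF, hG]
  | mul_X F i hF =>
    rw [map_mul, map_mul, Polynomial.mul_coeff_zero, map_mul, hF]
    congr 1
    cases i using Fin.cases with
    | zero => simp [lineEval, finSuccEquiv_X_zero]
    | succ i => simp [lineEval, finSuccEquiv_X_succ]

end PointIdeal

section PointsOnALine

variable {K : Type*} [Field K]

/-- The linear form in two variables vanishing at the point of the projective line with coordinate
vector `q`. -/
noncomputable def pointForm (q : Fin 2 → K) : MvPolynomial (Fin 2) K :=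
  C (q 0) * X 1 - C (q 1) * X 0

theorem pointForm_isHomogeneous (q : Fin 2 → K) : (pointForm q).IsHomogeneous 1 :=
  (isHomogeneous_C_mul_X _ _).sub (isHomogeneous_C_mul_X _ _)

theorem pointIdeal_eq_span_pointForm {q : Fin 2 → K} (hq : q ≠ 0) :
    pointIdeal q = Ideal.span {pointForm q} := by
  obtain ⟨i, hi⟩ := Function.ne_iff.mp hq
  rw [pointIdeal_eq_span hi, Fin.range_fin_succ, Fin.range_fin_succ]
  fin_cases i
  · simp [Fin.tail_def, pointForm]
  · rw [← Ideal.span_singleton_neg (pointForm q)]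
    simp [Fin.tail_def, pointForm, Ideal.span_insert]

theorem lineEval_pointForm (q r : Fin 2 → K) :
    lineEval q (pointForm r) = Polynomial.C (r 0 * q 1 - r 1 * q 0) * Polynomial.X := by
  simp only [lineEval, pointForm, map_sub, map_mul, aeval_X, aeval_C, Polynomial.algebraMap_eq]
  ring

theorem pointForm_ne_zero {q : Fin 2 → K} (hq : q ≠ 0) : pointForm q ≠ 0 := by
  intro h
  have hdet (r : Fin 2 → K) : q 0 * r 1 - q 1 * r 0 = 0 := by
    have := lineEval_pointForm r q
    rwa [h, map_zero, eq_comm, mul_eq_zero, or_iff_left Polynomial.X_ne_zero,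
      Polynomial.C_eq_zero] at this
  refine hq (funext fun i => ?_)
  fin_cases i
  · simpa using hdet ![0, 1]
  · simpa using hdet ![1, 0]

theorem pointForm_prime {q : Fin 2 → K} (hq : q ≠ 0) : Prime (pointForm q) := by
  rw [← Ideal.span_singleton_prime (pointForm_ne_zero hq), ← pointIdeal_eq_span_pointForm hq]
  exact RingHom.ker_isPrime _

theorem pointForm_isRelPrime {q r : Fin 2 → K} (hq : q ≠ 0) (hqr : ∀ c : K, c • q ≠ r) :
    IsRelPrime (pointForm q) (pointForm r) := by
  rw [(pointForm_prime hq).irreducible.isRelPrime_iff_not_dvd, ← Ideal.mem_span_singleton,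
    ← pointIdeal_eq_span_pointForm hq, mem_pointIdeal, lineEval_pointForm, mul_eq_zero,
    or_iff_left Polynomial.X_ne_zero, Polynomial.C_eq_zero]
  intro hdet
  obtain ⟨i, hi⟩ := Function.ne_iff.mp hq
  refine hqr (r i / q i) (funext fun j => ?_)
  rw [Pi.zero_apply] at hi
  rw [Pi.smul_apply, smul_eq_mul]
  rw [div_mul_eq_mul_div, div_eq_iff hi]
  fin_cases i <;> fin_cases j
  · rfl
  · exact sub_eq_zero.mp hdet
  · exact (sub_eq_zero.mp hdet).symm
  · rfl

theorem mem_pointIdeal_cons_zero_pow_iff {q : Fin 2 → K} (hq : q ≠ 0) {m : ℕ}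
    {F : MvPolynomial (Fin 3) K} :
    F ∈ pointIdeal (Fin.cons 0 q) ^ m ↔
      ∀ k, pointForm q ^ (m - k) ∣ (finSuccEquiv K 2 F).coeff k := by
  have hmap : (pointIdeal (Fin.cons 0 q)).map (finSuccEquiv K 2).toRingEquiv =
      Ideal.span {Polynomial.X, Polynomial.C (pointForm q)} := by
    ext f
    obtain ⟨F, rfl⟩ := (finSuccEquiv K 2).surjective f
    have hcoeff : pointForm q ∣ (finSuccEquiv K 2 F).coeff 0 ↔
        ∀ k, pointForm q ^ (1 - k) ∣ (finSuccEquiv K 2 F).coeff k :=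
      ⟨fun h k => by cases k <;> simp [h], fun h => by simpa using h 0⟩
    have hmem := mem_pow_iff_map_mem_pow (finSuccEquiv K 2).toRingEquiv
      (I := pointIdeal (Fin.cons 0 q)) (m := 1) (a := F)
    rw [pow_one, pow_one] at hmem
    rw [← pow_one (Ideal.span _), mem_span_X_C_pow_iff, ← hcoeff, ← Ideal.mem_span_singleton,
      ← pointIdeal_eq_span_pointForm hq, ← mem_pointIdeal_cons_zero_iff]
    exact hmem.symm
  rw [mem_pow_iff_map_mem_pow (finSuccEquiv K 2).toRingEquiv, hmap]
  exact mem_span_X_C_pow_iff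

end PointsOnALine

section CoordinateChange

variable {σ K : Type*} [Fintype σ] [DecidableEq σ] [Field K]

/-- Precomposition of polynomials with a linear automorphism `e` of affine space, that is, the
substitution of the coordinates of `e` for the variables. -/
noncomputable def linearSubst (e : (σ → K) ≃ₗ[K] (σ → K)) :
    MvPolynomial σ K ≃ₐ[K] MvPolynomial σ K :=
  let subst (f : (σ → K) →ₗ[K] (σ → K)) : MvPolynomial σ K →ₐ[K] MvPolynomial σ K :=
    bind₁ (f.toMvPolynomial (Pi.basisFun K σ) (Pi.basisFun K σ))
  have subst_comp {f g : (σ → K) →ₗ[K] (σ → K)} (h : g ∘ₗ f = LinearMap.id) :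
      (subst f).comp (subst g) = AlgHom.id K _ := by
    refine algHom_ext fun i => ?_
    simp only [subst, AlgHom.comp_apply, bind₁_X_right, AlgHom.id_apply]
    rw [← LinearMap.toMvPolynomial_comp, h, LinearMap.toMvPolynomial_id]
  AlgEquiv.ofAlgHom (subst e) (subst e.symm) (subst_comp e.symm_comp) (subst_comp e.comp_symm)

theorem eval_linearSubst_X (e : (σ → K) ≃ₗ[K] (σ → K)) (p : σ → K) (i : σ) :
    eval p (linearSubst e (X i)) = e p i := by
  have heval := LinearMap.toMvPolynomial_eval_eq_apply (Pi.basisFun K σ) (Pi.basisFun K σ)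
    e.toLinearMap i ((Pi.basisFun K σ).repr p)
  rw [LinearEquiv.symm_apply_apply] at heval
  exact (congrArg (eval p) (bind₁_X_right _ i)).trans heval

theorem isHomogeneous_linearSubst (e : (σ → K) ≃ₗ[K] (σ → K)) {F : MvPolynomial σ K} {d : ℕ}
    (hF : F.IsHomogeneous d) : (linearSubst e F).IsHomogeneous d := by
  rw [← one_mul d]
  exact hF.aeval _ fun i => LinearMap.toMvPolynomial_isHomogeneous _ _ _ i

theorem isHomogeneous_linearSubst_iff (e : (σ → K) ≃ₗ[K] (σ → K)) {F : MvPolynomial σ K}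
    {d : ℕ} : (linearSubst e F).IsHomogeneous d ↔ F.IsHomogeneous d := by
  refine ⟨fun h => ?_, isHomogeneous_linearSubst e⟩
  rw [← (linearSubst e).symm_apply_apply F]
  exact isHomogeneous_linearSubst e.symm h

theorem lineEval_linearSubst (e : (σ → K) ≃ₗ[K] (σ → K)) (p : σ → K) (F : MvPolynomial σ K) :
    lineEval p (linearSubst e F) = lineEval (e p) F := by
  suffices (lineEval p).comp (linearSubst e).toAlgHom = lineEval (e p) from
    DFunLike.congr_fun this F
  refine algHom_ext fun i => ?_
  have hX := isHomogeneous_X K i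
  rw [lineEval_eq_C_mul_X_pow hX, eval_X, ← eval_linearSubst_X e]
  exact lineEval_eq_C_mul_X_pow (isHomogeneous_linearSubst e hX) p

theorem linearSubst_mem_pointIdeal_pow_iff (e : (σ → K) ≃ₗ[K] (σ → K)) {p : σ → K} {m : ℕ}
    {F : MvPolynomial σ K} :
    linearSubst e F ∈ pointIdeal p ^ m ↔ F ∈ pointIdeal (e p) ^ m := by
  have hmap : (pointIdeal (e p)).map (linearSubst e).toRingEquiv = pointIdeal p := by
    ext F
    rw [Ideal.mem_map_of_equiv]
    constructor
    · rintro ⟨G, hG, rfl⟩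
      exact mem_pointIdeal.mpr ((lineEval_linearSubst e p G).trans (mem_pointIdeal.mp hG))
    · intro hF
      obtain ⟨G, rfl⟩ := (linearSubst e).surjective F
      exact ⟨G, mem_pointIdeal.mpr ((lineEval_linearSubst e p G).symm.trans hF), rfl⟩
  have hpow := mem_pow_iff_map_mem_pow (linearSubst e).toRingEquiv (I := pointIdeal (e p))
    (m := m) (a := F)
  rw [hmap] at hpow
  exact hpow.symm

end CoordinateChange

section MinimalGenerators

variable {K : Type*} [Field K]

theorem finrank_quotient_comap_subtype_map {M N : Type*} [AddCommGroup M] [AddCommGroup N]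
    [Module K M] [Module K N] (φ : M ≃ₗ[K] N) (A B : Submodule K M) :
    Module.finrank K
        (A.map φ.toLinearMap ⧸ (B.map φ.toLinearMap).comap (A.map φ.toLinearMap).subtype) =
      Module.finrank K (A ⧸ B.comap A.subtype) := by
  refine (Submodule.Quotient.equiv _ _ (φ.submoduleMap A) ?_).finrank_eq.symm
  ext y
  obtain ⟨x, rfl⟩ := (φ.submoduleMap A).surjective y
  rw [Submodule.mem_comap]
  exact (φ.submoduleMap A).injective.mem_set_image.trans (φ.injective.mem_set_image (s := B)).symm

theorem mem_degComp {J : Ideal (MvPolynomial (Fin 3) K)} {d : ℕ} {F : MvPolynomial (Fin 3) K} :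
    F ∈ degComp J d ↔ F ∈ J ∧ F.IsHomogeneous d := Iff.rfl

theorem oneGen_eq_mul (J : Ideal (MvPolynomial (Fin 3) K)) (d : ℕ) :
    oneGen J d = homogeneousSubmodule (Fin 3) K 1 * degComp J (d - 1) := by
  rw [Submodule.mul_eq_span_mul_set, oneGen]
  congr 1
  ext F
  simp only [Set.mem_ofPred_eq, Set.mem_mul, SetLike.mem_coe, eq_comm (a := F)]

theorem vnum_eq_of_algEquiv (φ : MvPolynomial (Fin 3) K ≃ₐ[K] MvPolynomial (Fin 3) K)
    (hφ : ∀ F d, (φ F).IsHomogeneous d ↔ F.IsHomogeneous d)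
    {J J' : Ideal (MvPolynomial (Fin 3) K)} (hJ : ∀ F, φ F ∈ J' ↔ F ∈ J) (d : ℕ) :
    vnum J d = vnum J' d := by
  have map_eq {M M' : Submodule K (MvPolynomial (Fin 3) K)} (h : ∀ F, φ F ∈ M' ↔ F ∈ M) :
      M.map φ.toLinearMap = M' := by
    ext F
    obtain ⟨G, rfl⟩ := φ.surjective F
    exact (φ.injective.mem_set_image (s := M)).trans (h G).symm
  have hcomp (e : ℕ) : (degComp J e).map φ.toLinearMap = degComp J' e :=
    map_eq fun F => and_congr (hJ F) (hφ F e)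
  have hlin : (homogeneousSubmodule (Fin 3) K 1).map φ.toLinearMap =
      homogeneousSubmodule (Fin 3) K 1 := map_eq fun F => hφ F 1
  have hgen : (oneGen J d).map φ.toLinearMap = oneGen J' d := by
    rw [oneGen_eq_mul, oneGen_eq_mul, ← hcomp]
    exact (Submodule.map_mul _ _ φ.toAlgHom).trans (congrArg (· * _) hlin)
  rw [vnum, vnum, ← hcomp, ← hgen]
  exact (finrank_quotient_comap_subtype_map φ.toLinearEquiv _ _).symm

end MinimalGenerators

section ConeIdeal

variable {K : Type*} [Field K] {n m : ℕ}

/-- The ideal `(x, G) ^ m ∩ (y₁, …, yₙ) ^ m` of `K[x, y₁, …, yₙ]` attached to a polynomial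
`G ∈ K[y₁, …, yₙ]`, for `K[x, y₁, …, yₙ]` read as `K[y₁, …, yₙ][x]`. If `n = 2` and `G` is the
product of linear forms vanishing at points of the line `x = 0`, this is the `m`-th symbolic power
of the ideal of these points and of the point `(1, 0, 0)`. -/
noncomputable def coneIdeal (G : MvPolynomial (Fin n) K) (m : ℕ) :
    Ideal (MvPolynomial (Fin (n + 1)) K) :=
  (Ideal.span {Polynomial.X, Polynomial.C G} ^ m ⊓
    ((idealOfVars (Fin n) K).map Polynomial.C) ^ m).comap (finSuccEquiv K n)

theorem mem_coneIdeal {G : MvPolynomial (Fin n) K} {F : MvPolynomial (Fin (n + 1)) K} :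
    F ∈ coneIdeal G m ↔
      ∀ k, G ^ (m - k) ∣ (finSuccEquiv K n F).coeff k ∧
        (finSuccEquiv K n F).coeff k ∈ idealOfVars (Fin n) K ^ m := by
  rw [coneIdeal, Ideal.mem_comap, Ideal.mem_inf, mem_span_X_C_pow_iff, ← Ideal.map_pow,
    Ideal.mem_map_C_iff, forall_and]

theorem X_pow_mul_rename_mem_coneIdeal_iff {G g : MvPolynomial (Fin n) K} {k : ℕ} :
    X 0 ^ k * rename Fin.succ g ∈ coneIdeal G m ↔
      G ^ (m - k) ∣ g ∧ g ∈ idealOfVars (Fin n) K ^ m := by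
  rw [mem_coneIdeal, finSuccEquiv_X_pow_mul_rename_succ]
  refine ⟨fun h => by simpa using h k, fun h j => ?_⟩
  obtain rfl | hjk := eq_or_ne k j
  · simpa using h
  · simp [Polynomial.coeff_monomial_of_ne _ hjk.symm]

theorem mem_pointIdeal_single_zero_pow_iff {F : MvPolynomial (Fin (n + 1)) K} :
    F ∈ pointIdeal (Pi.single 0 1) ^ m ↔
      ∀ k, (finSuccEquiv K n F).coeff k ∈ idealOfVars (Fin n) K ^ m := by
  have hmap : (pointIdeal (Pi.single 0 1)).map (finSuccEquiv K n).toRingEquiv =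
      (idealOfVars (Fin n) K).map Polynomial.C := by
    rw [pointIdeal_single_zero, idealOfVars, Ideal.map_span, Ideal.map_span, ← Set.range_comp,
      ← Set.range_comp]
    exact congrArg _ (congrArg _ (funext fun j => finSuccEquiv_X_succ))
  rw [mem_pow_iff_map_mem_pow (finSuccEquiv K n).toRingEquiv, hmap, ← Ideal.map_pow]
  exact Ideal.mem_map_C_iff

theorem mem_pointIdeal_pow_and_iff_mem_coneIdeal {l : ℕ} {q : Fin l → Fin 2 → K}
    (hq : ∀ i, q i ≠ 0) (hdist : ∀ i j, i ≠ j → ∀ c : K, c • q i ≠ q j)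
    {F : MvPolynomial (Fin 3) K} :
    ((∀ i, F ∈ pointIdeal (Fin.cons 0 (q i)) ^ m) ∧ F ∈ pointIdeal (Pi.single 0 1) ^ m) ↔
      F ∈ coneIdeal (∏ i, pointForm (q i)) m := by
  rw [mem_pointIdeal_single_zero_pow_iff, mem_coneIdeal, forall_and]
  refine and_congr_left fun _ => ?_
  simp only [mem_pointIdeal_cons_zero_pow_iff (hq _), ← Finset.prod_pow]
  rw [forall_comm]
  refine forall_congr' fun k =>
    ⟨fun h => Fintype.prod_dvd_of_isRelPrime (fun i j hij => ?_) h, fun h i => ?_⟩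
  · exact (pointForm_isRelPrime (hq i) (hdist i j hij)).pow
  · exact (Finset.dvd_prod_of_mem _ (Finset.mem_univ i)).trans h

end ConeIdeal

section GeneratorsOfConeIdeal

variable {K : Type*} [Field K] {G : MvPolynomial (Fin 2) K} {m r d : ℕ}

theorem finSuccEquiv_coeff_eq_zero_of_mem_degComp_coneIdeal (hG : G.IsHomogeneous (r + 1))
    {F : MvPolynomial (Fin 3) K} (hF : F ∈ degComp (coneIdeal G m) d) {k : ℕ} (hk : k ≤ m)
    (hd : d < m + r * (m - k)) : (finSuccEquiv K 2 F).coeff k = 0 := by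
  obtain ⟨hFJ, hFd⟩ := mem_degComp.mp hF
  obtain hdk | hkd := lt_or_ge d k
  · exact finSuccEquiv_coeff_eq_zero_of_lt hFd hdk
  · refine eq_zero_of_isHomogeneous_of_dvd_of_lt (hG.pow (m - k))
      (hFd.finSuccEquiv_coeff_isHomogeneous k (d - k) (by omega)) (mem_coneIdeal.mp hFJ k).1 ?_
    rw [add_one_mul]
    omega

theorem finSuccEquiv_coeff_eq_zero_of_mem_oneGen_coneIdeal (hG : G.IsHomogeneous (r + 1))
    (hd0 : 0 < d) {F : MvPolynomial (Fin 3) K} (hF : F ∈ oneGen (coneIdeal G m) d) {k : ℕ}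
    (hk : k ≤ m) (hd : d ≤ m + r * (m - k)) : (finSuccEquiv K 2 F).coeff k = 0 := by
  rw [oneGen_eq_mul] at hF
  induction hF using Submodule.mul_induction_on' with
  | add _ _ _ _ hF hF' => rw [map_add, Polynomial.coeff_add, hF, hF', add_zero]
  | mem_mul_mem f _ g hg =>
    rw [map_mul, Polynomial.coeff_mul]
    refine Finset.sum_eq_zero fun ij hij => ?_
    have hjk : ij.2 ≤ k :=
      (Nat.le_add_left _ _).trans_eq (Finset.HasAntidiagonal.mem_antidiagonal.mp hij)
    have hmono : r * (m - k) ≤ r * (m - ij.2) := Nat.mul_le_mul_left r (by omega)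
    rw [finSuccEquiv_coeff_eq_zero_of_mem_degComp_coneIdeal hG hg (hjk.trans hk) (by omega),
      mul_zero]

theorem X_pow_mul_rename_pow_mul_mem_degComp_coneIdeal (hG : G.IsHomogeneous (r + 1)) {k s : ℕ}
    (hk : k ≤ m) (hs : m + r * (m - k) + s = d) (hd : 2 * m ≤ d) {h : MvPolynomial (Fin 2) K}
    (hh : h.IsHomogeneous s) :
    X 0 ^ k * rename Fin.succ (G ^ (m - k) * h) ∈ degComp (coneIdeal G m) d := by
  have hdeg : k + ((r + 1) * (m - k) + s) = d := by
    rw [add_one_mul]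
    omega
  have hGh := (hG.pow (m - k)).mul hh
  exact mem_degComp.mpr ⟨X_pow_mul_rename_mem_coneIdeal_iff.mpr
    ⟨dvd_mul_right _ _, mem_pow_idealOfVars_of_isHomogeneous hGh (by omega)⟩,
    isHomogeneous_X_pow_mul_rename_succ hGh hdeg⟩

theorem X_pow_mul_rename_pow_mul_mem_oneGen_coneIdeal (hG : G.IsHomogeneous (r + 1)) {k s : ℕ}
    (hk : k ≤ m) (hs : m + r * (m - k) + (s + 1) = d) (hd : 2 * m < d)
    {h : MvPolynomial (Fin 2) K} (hh : h.IsHomogeneous (s + 1)) :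
    X 0 ^ k * rename Fin.succ (G ^ (m - k) * h) ∈ oneGen (coneIdeal G m) d := by
  have hmul : h ∈ homogeneousSubmodule (Fin 2) K 1 * homogeneousSubmodule (Fin 2) K s := by
    rwa [← homogeneousSubmodule_one_pow K s, ← pow_succ', homogeneousSubmodule_one_pow]
  clear hh
  induction hmul using Submodule.mul_induction_on' with
  | add a _ b _ ha hb => simpa only [mul_add, map_add] using add_mem ha hb
  | mem_mul_mem a ha b hb =>
    have hfactor : X 0 ^ k * rename Fin.succ (G ^ (m - k) * (a * b)) =
        rename Fin.succ a * (X 0 ^ k * rename Fin.succ (G ^ (m - k) * b)) := by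
      simp only [map_mul]
      ring
    rw [hfactor, oneGen_eq_mul]
    exact Submodule.mul_mem_mul (IsHomogeneous.rename_isHomogeneous ha)
      (X_pow_mul_rename_pow_mul_mem_degComp_coneIdeal hG hk (by omega) (by omega) hb)

theorem X_pow_mul_rename_mem_oneGen_coneIdeal (hG : G.IsHomogeneous (r + 1)) (hd : 2 * m < d)
    {k : ℕ} (hk : k ≤ m → m + r * (m - k) ≠ d) {g : MvPolynomial (Fin 2) K}
    (hg : g.IsHomogeneous (d - k)) (hkd : k ≤ d)
    (hmem : X 0 ^ k * rename Fin.succ g ∈ coneIdeal G m) :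
    X 0 ^ k * rename Fin.succ g ∈ oneGen (coneIdeal G m) d := by
  obtain ⟨hdvd, hpow⟩ := X_pow_mul_rename_mem_coneIdeal_iff.mp hmem
  obtain hkm | hmk := le_or_gt k m
  · obtain hlt | hle := lt_or_ge (d - k) ((r + 1) * (m - k))
    · rw [eq_zero_of_isHomogeneous_of_dvd_of_lt (hG.pow _) hg hdvd hlt, map_zero, mul_zero]
      exact zero_mem _
    · obtain ⟨h, hh, rfl⟩ := exists_isHomogeneous_eq_mul_of_dvd (hG.pow _) hg hdvd
      have := hk hkm
      rw [add_one_mul] at hle hh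
      obtain ⟨s, hs⟩ : ∃ s, d - k - (r * (m - k) + (m - k)) = s + 1 :=
        Nat.exists_eq_add_one.mpr (by omega)
      exact X_pow_mul_rename_pow_mul_mem_oneGen_coneIdeal hG hkm (by omega) hd (hs ▸ hh)
  · obtain ⟨j, rfl⟩ : ∃ j, k = j + 1 := Nat.exists_eq_add_one.mpr (by omega)
    rw [pow_succ', mul_assoc, oneGen_eq_mul]
    refine Submodule.mul_mem_mul (isHomogeneous_X K 0) (mem_degComp.mpr
      ⟨X_pow_mul_rename_mem_coneIdeal_iff.mpr ⟨?_, hpow⟩,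
        isHomogeneous_X_pow_mul_rename_succ hg (by omega)⟩)
    rw [show m - j = 0 by omega, pow_zero]
    exact one_dvd g

theorem mem_oneGen_coneIdeal_iff (hG : G.IsHomogeneous (r + 1)) (hd : 2 * m < d)
    {F : MvPolynomial (Fin 3) K} (hF : F ∈ degComp (coneIdeal G m) d) :
    F ∈ oneGen (coneIdeal G m) d ↔
      ∀ k ≤ m, m + r * (m - k) = d → (finSuccEquiv K 2 F).coeff k = 0 := by
  refine ⟨fun h k hk hkd => finSuccEquiv_coeff_eq_zero_of_mem_oneGen_coneIdeal hG (by omega) h hk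
    hkd.ge, fun h => ?_⟩
  obtain ⟨hFJ, hFd⟩ := mem_degComp.mp hF
  rw [← sum_X_pow_mul_rename_succ_coeff F]
  refine Submodule.sum_mem _ fun k hk => ?_
  have hne := Polynomial.mem_support_iff.mp hk
  have hkd : k ≤ d := not_lt.mp fun hdk => hne (finSuccEquiv_coeff_eq_zero_of_lt hFd hdk)
  exact X_pow_mul_rename_mem_oneGen_coneIdeal hG hd (fun hkm hk => hne (h k hkm hk))
    (hFd.finSuccEquiv_coeff_isHomogeneous k (d - k) (by omega)) hkd
    (X_pow_mul_rename_mem_coneIdeal_iff.mpr (mem_coneIdeal.mp hFJ k))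

theorem vnum_coneIdeal_eq_zero (hG : G.IsHomogeneous (r + 1)) (hd : 2 * m < d)
    (hne : ∀ k ≤ m, m + r * (m - k) ≠ d) : vnum (coneIdeal G m) d = 0 := by
  have htop : (oneGen (coneIdeal G m) d).comap (degComp (coneIdeal G m) d).subtype = ⊤ :=
    eq_top_iff.mpr fun F _ => (mem_oneGen_coneIdeal_iff hG hd F.2).mpr
      fun k hk hkd => absurd hkd (hne k hk)
  rw [vnum, htop]
  exact Module.finrank_zero_of_subsingleton

/-- The `K`-linear map taking a polynomial to its coefficient of `x ^ k`, for `x` the first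
variable. -/
noncomputable def firstVarCoeff (K : Type*) [Field K] {n : ℕ} (k : ℕ) :
    MvPolynomial (Fin (n + 1)) K →ₗ[K] MvPolynomial (Fin n) K :=
  (Polynomial.lcoeff (MvPolynomial (Fin n) K) k).restrictScalars K ∘ₗ
    (finSuccEquiv K n).toLinearMap

theorem firstVarCoeff_apply {n : ℕ} (k : ℕ) (F : MvPolynomial (Fin (n + 1)) K) :
    firstVarCoeff K k F = (finSuccEquiv K n F).coeff k := rfl

theorem map_firstVarCoeff_degComp_coneIdeal (hG : G.IsHomogeneous (r + 1)) (hd : 2 * m ≤ d)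
    {k : ℕ} (hk : k ≤ m) (hkd : m + r * (m - k) = d) :
    (degComp (coneIdeal G m) d).map (firstVarCoeff K k) = Submodule.span K {G ^ (m - k)} := by
  refine le_antisymm ?_ ((Submodule.span_singleton_le_iff_mem _ _).mpr ?_)
  · rintro _ ⟨F, hF, rfl⟩
    obtain ⟨hFJ, hFd⟩ := mem_degComp.mp hF
    have hcoeff := hFd.finSuccEquiv_coeff_isHomogeneous k ((r + 1) * (m - k))
      (by rw [add_one_mul]; omega)
    exact Submodule.mem_span_singleton.mpr
      (exists_smul_eq_of_isHomogeneous_of_dvd (hG.pow _) hcoeff (mem_coneIdeal.mp hFJ k).1)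
  · refine ⟨_, X_pow_mul_rename_pow_mul_mem_degComp_coneIdeal hG hk hkd hd
      (isHomogeneous_one _ K), ?_⟩
    rw [firstVarCoeff_apply, finSuccEquiv_X_pow_mul_rename_succ, Polynomial.coeff_monomial_same,
      mul_one]

theorem vnum_coneIdeal_eq_one (hG : G.IsHomogeneous (r + 1)) (hG0 : G ≠ 0) (hd : 2 * m < d)
    {k : ℕ} (hk : k ≤ m) (hkd : m + r * (m - k) = d) : vnum (coneIdeal G m) d = 1 := by
  have hunique {j : ℕ} (hj : j ≤ m) (hjd : m + r * (m - j) = d) : j = k := by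
    have hr : 0 < r := Nat.pos_of_ne_zero fun hr => by
      subst hr
      omega
    have := Nat.eq_of_mul_eq_mul_left hr (by omega : r * (m - j) = r * (m - k))
    omega
  have hker : ((firstVarCoeff K k).domRestrict (degComp (coneIdeal G m) d)).ker =
      (oneGen (coneIdeal G m) d).comap (degComp (coneIdeal G m) d).subtype := by
    ext F
    refine Iff.trans ?_ (mem_oneGen_coneIdeal_iff hG hd F.2).symm
    exact ⟨fun hF j hj hjd => hunique hj hjd ▸ hF, fun hF => hF k hk hkd⟩
  rw [vnum, ← hker, (LinearMap.quotKerEquivRange _).finrank_eq, LinearMap.range_domRestrict,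
    map_firstVarCoeff_degComp_coneIdeal hG hd.le hk hkd, finrank_span_singleton (pow_ne_zero _ hG0)]

theorem finsum_vnum_coneIdeal (hG : G.IsHomogeneous (r + 1)) (hG0 : G ≠ 0) (hr : 0 < r) :
    ∑ᶠ d ∈ Set.Ioi (2 * m), vnum (coneIdeal G m) d = m - m / r := by
  have hinj : Function.Injective fun j => m + r * j := fun i j hij =>
    Nat.eq_of_mul_eq_mul_left hr (Nat.add_left_cancel hij)
  have hlt (j : ℕ) : m / r < j ↔ 2 * m < m + r * j := by
    rw [Nat.div_lt_iff_lt_mul hr, mul_comm]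
    omega
  rw [finsum_mem_eq_sum_of_inter_support_eq (t := (Finset.Ioc (m / r) m).image fun j => m + r * j),
    Finset.sum_image hinj.injOn, Finset.sum_congr rfl (g := 1)]
  · simp
  · intro j hj
    obtain ⟨hj, hjm⟩ := Finset.mem_Ioc.mp hj
    exact vnum_coneIdeal_eq_one hG hG0 ((hlt j).mp hj) (Nat.sub_le m j)
      (by rw [Nat.sub_sub_self hjm])
  · ext d
    refine and_congr_left fun hd => ⟨fun h2m => ?_, fun h => ?_⟩
    · by_contra hnot
      refine hd (vnum_coneIdeal_eq_zero hG h2m fun k _ hkd => hnot ?_)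
      subst hkd
      exact Finset.mem_image_of_mem _ (Finset.mem_Ioc.mpr ⟨(hlt _).mpr h2m, Nat.sub_le m k⟩)
    · obtain ⟨j, hj, rfl⟩ := Finset.mem_image.mp h
      exact (hlt j).mp (Finset.mem_Ioc.mp hj).1

end GeneratorsOfConeIdeal

section Coordinates

variable {K : Type*} [Field K] {n : ℕ}

theorem exists_linearEquiv_apply_eq_single_and_apply_zero_eq_zero
    {L : Module.Dual K (Fin (n + 1) → K)} {a : Fin (n + 1) → K} (ha : L a ≠ 0) :
    ∃ e : (Fin (n + 1) → K) ≃ₗ[K] (Fin (n + 1) → K),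
      e a = Pi.single 0 1 ∧ ∀ v, L v = 0 → e v 0 = 0 := by
  have hL : L ≠ 0 := fun h => ha (by rw [h, LinearMap.zero_apply])
  have hfinrank : Module.finrank K L.ker = n := by
    simpa using Module.Dual.finrank_ker_add_one_of_ne_zero hL
  obtain ⟨b, hb_zero, hb_succ⟩ : ∃ b : Module.Basis (Fin (n + 1)) K (Fin (n + 1) → K),
      b 0 = a ∧ ∀ i : Fin n, L (b i.succ) = 0 :=
    ⟨.mkFinCons a (Module.finBasisOfFinrankEq K L.ker hfinrank)
      (fun c x hx hcx => by simpa [LinearMap.mem_ker.mp hx, ha] using congrArg L hcx)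
      (fun z => ⟨-(L z / L a), by simp [ha]⟩), by simp, by simp⟩
  have hcoord : L = L a • b.coord 0 := by
    refine b.ext fun i => ?_
    cases i using Fin.cases with
    | zero => simp [← hb_zero]
    | succ i => simp [hb_succ]
  refine ⟨b.equivFun, ?_, fun v hv => ?_⟩
  · rw [← hb_zero, b.equivFun_apply, b.repr_self, Finsupp.single_eq_pi_single]
  · rw [hcoord, LinearMap.smul_apply, smul_eq_mul, mul_eq_zero, or_iff_right ha] at hv
    exact hv

theorem exists_linearEquiv_apply_last_eq_single_and_apply_castSucc_eq_cons {l : ℕ}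
    {p : Fin (l + 1) → Fin (n + 1) → K} (hp0 : ∀ i, p i ≠ 0)
    (hdist : ∀ i j, i ≠ j → ∀ c : K, c • p i ≠ p j) {L : Module.Dual K (Fin (n + 1) → K)}
    (hon : ∀ i : Fin l, L (p i.castSucc) = 0) (hoff : L (p (Fin.last l)) ≠ 0) :
    ∃ (e : (Fin (n + 1) → K) ≃ₗ[K] (Fin (n + 1) → K)) (q : Fin l → Fin n → K),
      e (p (Fin.last l)) = Pi.single 0 1 ∧ (∀ i, e (p i.castSucc) = Fin.cons 0 (q i)) ∧
        (∀ i, q i ≠ 0) ∧ ∀ i j, i ≠ j → ∀ c : K, c • q i ≠ q j := by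
  obtain ⟨e, he_last, he_ker⟩ := exists_linearEquiv_apply_eq_single_and_apply_zero_eq_zero hoff
  have he (i : Fin l) : ∃ q : Fin n → K, e (p i.castSucc) = Fin.cons 0 q :=
    ⟨Fin.tail (e (p i.castSucc)), by rw [← he_ker _ (hon i), Fin.cons_self_tail]⟩
  choose q he using he
  refine ⟨e, q, he_last, he, fun i hi => ?_,
    fun i j hij c hc => ?_⟩
  · refine hp0 i.castSucc (e.map_eq_zero_iff.mp ?_)
    rw [he, hi]
    exact Matrix.cons_zero_zero
  · refine hdist i.castSucc j.castSucc ((Fin.castSucc_injective l).ne hij) c (e.injective ?_)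
    rw [map_smul, he i, he j, ← hc]
    exact (Matrix.smul_cons _ _ _).trans (congrArg (Fin.cons · _) (smul_zero c))

end Coordinates

theorem stmt_10_general
    (K : Type*) [Field K] (l : ℕ) (hl : 1 < l)
    (p : Fin (l + 1) → Fin 3 → K) (hp0 : ∀ i, p i ≠ 0)
    (hdist : ∀ i j, i ≠ j → ∀ c : K, c • p i ≠ p j)
    (L : Fin 3 → K) (hon : ∀ i : Fin (l + 1), (i : ℕ) < l → ∑ j, L j * p i j = 0)
    (hoff : ∑ j, L j * p (Fin.last l) j ≠ 0)
    (P : Fin (l + 1) → Ideal (MvPolynomial (Fin 3) K))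
    (hP : ∀ i F, F ∈ P i ↔ ∀ n, eval (p i) (homogeneousComponent n F) = 0)
    (m : ℕ) (Im : Ideal (MvPolynomial (Fin 3) K)) (hIm : Im = ⨅ i, P i ^ m) :
    ∑ᶠ d ∈ Set.Ioi (2 * m), vnum Im d = m - m / (l - 1) := by
  obtain rfl : P = fun i => pointIdeal (p i) := funext fun i => Ideal.ext fun F =>
    (hP i F).trans mem_pointIdeal_iff_eval_homogeneousComponent.symm
  obtain ⟨e, q, he_last, he_cons, hq0, hqdist⟩ :=
    exists_linearEquiv_apply_last_eq_single_and_apply_castSucc_eq_cons hp0 hdist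
      (L := dotProductBilin K K L) (fun i => hon i.castSucc i.is_lt) hoff
  have hIm_iff (F : MvPolynomial (Fin 3) K) :
      linearSubst e F ∈ Im ↔ F ∈ coneIdeal (∏ i, pointForm (q i)) m := by
    rw [← mem_pointIdeal_pow_and_iff_mem_coneIdeal hq0 hqdist, hIm, Submodule.mem_iInf,
      Fin.forall_fin_succ']
    simp only [linearSubst_mem_pointIdeal_pow_iff, he_cons, he_last]
  have hG : (∏ i, pointForm (q i)).IsHomogeneous (l - 1 + 1) := by
    simpa [Nat.sub_add_cancel hl.le] using
      IsHomogeneous.prod Finset.univ _ _ fun i _ => pointForm_isHomogeneous (q i)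
  rw [← finsum_vnum_coneIdeal hG
    (Finset.prod_ne_zero_iff.mpr fun i _ => pointForm_ne_zero (hq0 i)) (Nat.sub_pos_of_lt hl)]
  exact finsum_mem_congr rfl fun d _ => (vnum_eq_of_algEquiv (linearSubst e)
    (fun _ _ => isHomogeneous_linearSubst_iff e) hIm_iff d).symm

theorem stmt_10
    (K : Type*) [Field K] [CharZero K]
    -- `l > 2` points on a line plus one point off the line
    (l : ℕ) (hl : 2 < l)
    (p : Fin (l + 1) → Fin 3 → K) (hp0 : ∀ i, p i ≠ 0)
    (hdist : ∀ i j, i ≠ j → ∀ c : K, c • p i ≠ p j)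
    (L : Fin 3 → K) (hL : L ≠ 0)
    (hon : ∀ i : Fin (l + 1), (i : ℕ) < l → ∑ j, L j * p i j = 0)
    (hoff : ∑ j, L j * p (Fin.last l) j ≠ 0)
    -- `P i` is the homogeneous prime ideal of all forms vanishing at `p i`
    (P : Fin (l + 1) → Ideal (MvPolynomial (Fin 3) K))
    (hP : ∀ i F, F ∈ P i ↔ ∀ n, eval (p i) (homogeneousComponent n F) = 0)
    -- the uniform fat point ideal `I^{(m)} = P_1^m ∩ ⋯ ∩ P_{l+1}^m`
    (m : ℕ) (hm : 1 ≤ m) (hdvd : l * (l - 1) ∣ m)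
    (Im : Ideal (MvPolynomial (Fin 3) K)) (hIm : Im = ⨅ i, P i ^ m) :
    ∑ᶠ d ∈ Set.Ioi (2 * m), vnum Im d = m - m / (l - 1) := by
  exact stmt_10_general K l (Nat.lt_of_succ_lt hl) p hp0 hdist L hon hoff P hP m Im hIm
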